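/- For the unit square 𝕌 with the Euclidean topology: (i) for the full homeomorphism group 𝒢_𝕌, the family {cl(𝒢_𝕌·x) : x ∈ 𝕌} of closures of orbits has exactly 2 elements (i.e. h(𝒢_𝕌, 𝕌) = 1); (ii) for every subgroup G of the homeomorphism group of 𝕌, the family {cl(G·x) : x ∈ 𝕌} is either infinite or has at least 2 elements; (iii) for every natural number n ≥ 1 there exists a subgroup G of the homeomorphism group of 𝕌 whose family {cl(G·x) : x ∈ 𝕌} has exactly n + 1 elements; and (iv) there exists a subgroup G for which this family is infinite. Equivalently, P_h(𝕌) = {n : n ≥ 1} ∪ {+∞}. -/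

import Mathlib

open Set

/-- The unit interval `[0,1]` with its Euclidean (subspace) topology. -/
local notation "𝕀" => unitInterval

/-- The group of self-homeomorphisms of a topological space, under composition. -/
instance homeoGroup {X : Type*} [TopologicalSpace X] : Group (X ≃ₜ X) where
  mul f g := g.trans f
  one := Homeomorph.refl X
  inv := Homeomorph.symm
  mul_assoc _ _ _ := rfl
  one_mul _ := Homeomorph.ext fun _ => rfl
  mul_one _ := Homeomorph.ext fun _ => rfl
  inv_mul_cancel := Homeomorph.self_trans_symm

/-- The family of closures of orbits of a subgroup `G` of the homeomorphism group of
the unit square `[0,1] × [0,1]` with the topology induced from the Euclidean plane. -/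
def orbitClosures (G : Subgroup ((𝕀 × 𝕀) ≃ₜ (𝕀 × 𝕀))) : Set (Set (𝕀 × 𝕀)) :=
  {S | ∃ x : 𝕀 × 𝕀, S = closure {y | ∃ g ∈ G, g x = y}}

lemma exists_log_lift (g : ℝ × ℝ → ℂ) (hg : Continuous g) (h0 : ∀ x, g x ≠ 0) :
    ∃ f : ℝ × ℝ → ℂ, Continuous f ∧ ∀ x, Complex.exp (f x) = g x := by
  rcases Complex.isCoveringMapOn_exp.existsUnique_continuousMap_lifts
    (⟨g, hg⟩ : C(ℝ × ℝ, ℂ)) (a₀ := (0, 0)) (Complex.exp_log (h0 (0, 0)))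
    (fun x ↦ h0 x) with ⟨f, ⟨-, hf⟩, -⟩
  exact ⟨f, f.continuous, fun x => congrFun hf x⟩

/-- A continuous function on `ℝ` with values in `2πiℤ` is constant. -/
lemma const_of_exp_eq_one (u : ℝ → ℂ) (hu : Continuous u) (h1 : ∀ t, Complex.exp (u t) = 1)
    (s t : ℝ) : u s = u t := by
  have hI : (2 * Real.pi * Complex.I : ℂ) ≠ 0 := Complex.two_pi_I_ne_zero
  choose m hm using fun t => Complex.exp_eq_one_iff.1 (h1 t)
  have hmc : Continuous m := by
    have h2 : Continuous fun t => (m t : ℂ) := by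
      have : (fun t => (m t : ℂ)) = fun t => u t / (2 * Real.pi * Complex.I) := by
        funext t
        rw [hm t, mul_div_cancel_right₀ _ hI]
      rw [this]
      fun_prop
    have h3 : Continuous fun t => (m t : ℝ) := by
      simpa [Function.comp_def] using Complex.continuous_re.comp h2
    exact Int.isClosedEmbedding_coe_real.isEmbedding.continuous_iff.2 h3
  have := PreconnectedSpace.constant (inferInstance : PreconnectedSpace ℝ) hmc (x := s) (y := t)
  rw [hm s, hm t, this]

/-- There is no free homotopy in `ℂ∖{0}` from the standard loop to a constant. -/
lemma no_null_homotopy (H : ℝ × ℝ → ℂ) (hH : Continuous H) (h0 : ∀ x, H x ≠ 0)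
    (hper : ∀ s, H (s, 2 * Real.pi) = H (s, 0)) (c : ℂ) (hc : ∀ θ, H (0, θ) = c)
    (ε : ℂ) (h1 : ∀ θ : ℝ, H (1, θ) = ε * Complex.exp (θ * Complex.I)) : False := by
  obtain ⟨L, hL, hexp⟩ := exists_log_lift H hH h0
  have hε : ε ≠ 0 := by
    intro h
    exact h0 (1, 0) (by rw [h1, h, zero_mul])
  have hcn : c ≠ 0 := by rw [← hc 0]; exact h0 _
  have e1 := const_of_exp_eq_one (fun s => L (s, 2 * Real.pi) - L (s, 0)) (by fun_prop)
    (fun s => by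
      rw [Complex.exp_sub, hexp, hexp, hper, div_self (h0 _)]) 0 1
  have e2 := const_of_exp_eq_one (fun θ => L (0, θ) - L (0, 0)) (by fun_prop)
    (fun s => by
      rw [Complex.exp_sub, hexp, hexp, hc, hc, div_self hcn]) (2 * Real.pi) 0
  have e3 := const_of_exp_eq_one (fun θ => L (1, θ) - L (1, 0) - θ * Complex.I) (by fun_prop)
    (fun s => by
      rw [Complex.exp_sub, Complex.exp_sub, hexp, hexp, h1, h1]
      have := Complex.exp_ne_zero (s * Complex.I)
      simp only [Complex.ofReal_zero, zero_mul, Complex.exp_zero]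
      field_simp) (2 * Real.pi) 0
  rw [e2] at e1
  rw [← e1] at e3
  simp at e3

lemma boundary_inv (h : Metric.closedBall (0 : ℂ) 1 ≃ₜ Metric.closedBall (0 : ℂ) 1)
    (p : Metric.closedBall (0 : ℂ) 1) (hp : ‖(p : ℂ)‖ = 1) : ‖(h p : ℂ)‖ = 1 := by
  by_contra hne
  have hq : ‖(h p : ℂ)‖ < 1 := lt_of_le_of_ne (mem_closedBall_zero_iff.1 (h p).2) hne
  set q : ℂ := (h p : ℂ) with hqdef
  set ε : ℝ := 1 - ‖q‖ with hε
  have hεp : 0 < ε := by linarith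
  have hγ : ∀ θ : ℝ, q + ε * Complex.exp (θ * Complex.I) ∈ Metric.closedBall (0 : ℂ) 1 := by
    intro θ
    rw [mem_closedBall_zero_iff]
    calc _ ≤ ‖q‖ + ‖(ε : ℂ) * Complex.exp (θ * Complex.I)‖ := norm_add_le _ _
      _ = 1 := by
        rw [norm_mul, Complex.norm_exp_ofReal_mul_I, Complex.norm_real, Real.norm_of_nonneg hεp.le]
        ring
  let γ : ℝ → Metric.closedBall (0 : ℂ) 1 := fun θ => ⟨_, hγ θ⟩
  have hγc : Continuous γ := by
    apply Continuous.subtype_mk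
    fun_prop
  let σ : ℝ → ℝ := fun s => max 0 (min 1 s)
  have hσ0 : ∀ s, 0 ≤ σ s := fun s => le_max_left _ _
  have hσ1 : ∀ s, σ s ≤ 1 := fun s => max_le zero_le_one (min_le_left _ _)
  have hσc : Continuous σ := by fun_prop
  have hmem : ∀ x : ℝ × ℝ, ((σ x.1 : ℂ) * (h.symm (γ x.2) : ℂ)) ∈ Metric.closedBall (0 : ℂ) 1 := by
    intro x
    have h1 : ‖(h.symm (γ x.2) : ℂ)‖ ≤ 1 := mem_closedBall_zero_iff.1 (h.symm (γ x.2)).2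
    rw [mem_closedBall_zero_iff, norm_mul, Complex.norm_real, Real.norm_of_nonneg (hσ0 _)]
    exact mul_le_one₀ (hσ1 _) (norm_nonneg _) h1
  let w : ℝ × ℝ → Metric.closedBall (0 : ℂ) 1 := fun x => ⟨_, hmem x⟩
  have hwc : Continuous w := by
    apply Continuous.subtype_mk
    fun_prop
  have hγq : ∀ θ, γ θ ≠ h p := by
    intro θ hθ
    have := congrArg Subtype.val hθ
    simp only [γ, ← hqdef] at this
    have h2 : (ε : ℂ) * Complex.exp (θ * Complex.I) = 0 := by
      linear_combination this
    rcases mul_eq_zero.1 h2 with h3 | h3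
    · exact hεp.ne' (by exact_mod_cast h3)
    · exact Complex.exp_ne_zero _ h3
  have hwp : ∀ x, w x ≠ p := by
    intro x hx
    have h1 : ‖(h.symm (γ x.2) : ℂ)‖ ≤ 1 := mem_closedBall_zero_iff.1 (h.symm (γ x.2)).2
    have hv : (σ x.1 : ℂ) * (h.symm (γ x.2) : ℂ) = p := congrArg Subtype.val hx
    have hn : σ x.1 * ‖(h.symm (γ x.2) : ℂ)‖ = 1 := by
      have := congrArg norm hv
      rwa [hp, norm_mul, Complex.norm_real, Real.norm_of_nonneg (hσ0 _)] at this
    have hs : σ x.1 = 1 := by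
      have := hσ1 x.1
      have := hσ0 x.1
      nlinarith
    rw [hs] at hv
    have : h.symm (γ x.2) = p := Subtype.ext (by simpa using hv)
    exact hγq x.2 (by rw [← this]; simp)
  refine no_null_homotopy (fun x => (h (w x) : ℂ) - q) (by fun_prop) ?_ ?_
    ((h ⟨0, by simp⟩ : ℂ) - q) ?_ ε ?_
  · intro x hx
    exact hwp x (h.injective (Subtype.ext (sub_eq_zero.1 hx)))
  · intro s
    have : γ (2 * Real.pi) = γ 0 := by
      apply Subtype.ext
      simp [γ, Complex.exp_two_pi_mul_I]
    simp only [w, this]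
  · intro θ
    simp [w, σ]
  · intro θ
    simp [w, σ, γ]

lemma bump (p q : ℂ) (r : ℝ) (hr : ‖q - p‖ < r) :
    ∃ h : ℂ ≃ₜ ℂ, h p = q ∧ ∀ z, r ≤ ‖z - p‖ → h z = z := by
  have hr0 : 0 < r := (norm_nonneg _).trans_lt hr
  let f : ℂ → ℂ := fun z => z + ((max 0 (1 - ‖z - p‖ / r) : ℝ) : ℂ) * (q - p)
  have hf : ApproximatesLinearOn f ((ContinuousLinearEquiv.refl ℝ ℂ : ℂ ≃L[ℝ] ℂ) : ℂ →L[ℝ] ℂ) univ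
      (‖q - p‖₊ / Real.toNNReal r) := by
    intro x _ y _
    have h1 : f x - f y - (x - y) = ((max 0 (1 - ‖x - p‖ / r) - max 0 (1 - ‖y - p‖ / r) : ℝ) : ℂ)
        * (q - p) := by
      simp only [f]; push_cast; ring
    have h2 : |max 0 (1 - ‖x - p‖ / r) - max 0 (1 - ‖y - p‖ / r)| ≤ ‖x - y‖ / r := by
      rw [max_comm 0, max_comm 0]
      refine (abs_max_sub_max_le_abs _ _ _).trans ?_
      have h3 : 1 - ‖x - p‖ / r - (1 - ‖y - p‖ / r) = (‖y - p‖ - ‖x - p‖) / r := by ring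
      rw [h3, abs_div, abs_of_pos hr0]
      gcongr
      have h4 := abs_norm_sub_norm_le (y - p) (x - p)
      rwa [sub_sub_sub_cancel_right, norm_sub_rev y x] at h4
    simp only [ContinuousLinearEquiv.coe_refl, ContinuousLinearMap.coe_id', id]
    rw [h1, norm_mul, Complex.norm_real, Real.norm_eq_abs]
    calc _ ≤ ‖x - y‖ / r * ‖q - p‖ := by gcongr
      _ = _ := by
        rw [NNReal.coe_div, Real.coe_toNNReal r hr0.le, coe_nnnorm]; ring
  have hc : (‖q - p‖₊ / Real.toNNReal r : NNReal) <
      ‖((ContinuousLinearEquiv.refl ℝ ℂ).symm : ℂ →L[ℝ] ℂ)‖₊⁻¹ := by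
    have : ‖((ContinuousLinearEquiv.refl ℝ ℂ).symm : ℂ →L[ℝ] ℂ)‖₊ = 1 := by
      simp
    rw [this, inv_one, ← NNReal.coe_lt_coe]
    rw [NNReal.coe_div, Real.coe_toNNReal r hr0.le, coe_nnnorm, NNReal.coe_one]
    rwa [div_lt_one hr0]
  refine ⟨hf.toHomeomorph f (Or.inr hc), ?_, ?_⟩
  · show f p = q
    simp [f]
  · intro z hz
    show f z = z
    have : max 0 (1 - ‖z - p‖ / r) = 0 := by
      apply max_eq_left
      rw [sub_nonpos, one_le_div hr0]
      exact hz
    simp [f, this]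

lemma transitive_open (U : Set ℂ) (hU : IsOpen U) (hc : IsPreconnected U) (p q : ℂ)
    (hp : p ∈ U) (hq : q ∈ U) : ∃ h : ℂ ≃ₜ ℂ, h p = q ∧ ∀ z, z ∉ U → h z = z := by
  refine hc.induction₂ (fun p q => ∃ h : ℂ ≃ₜ ℂ, h p = q ∧ ∀ z, z ∉ U → h z = z) ?_ ?_ ?_ hp hq
  · intro x hx
    obtain ⟨r, hr, hb⟩ := Metric.isOpen_iff.1 hU x hx
    refine Filter.Eventually.filter_mono nhdsWithin_le_nhds ?_
    filter_upwards [Metric.ball_mem_nhds x hr] with y hy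
    obtain ⟨h, h1, h2⟩ := bump x y r (by simpa [dist_eq_norm] using hy)
    refine ⟨h, h1, fun z hz => h2 z ?_⟩
    by_contra hlt
    exact hz (hb (by simpa [dist_eq_norm] using hlt))
  · rintro x y z _ _ _ ⟨g, g1, g2⟩ ⟨h, h1, h2⟩
    exact ⟨g.trans h, by simp [g1, h1], fun z hz => by simp [g2 z hz, h2 z hz]⟩
  · rintro x y _ _ ⟨g, g1, g2⟩
    refine ⟨g.symm, by simp [← g1], fun z hz => ?_⟩
    rw [Homeomorph.symm_apply_eq, g2 z hz]

lemma annulus_preconnected (a b : ℝ) : IsPreconnected {z : ℂ | a < ‖z‖ ∧ ‖z‖ < b} := by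
  have : {z : ℂ | a < ‖z‖ ∧ ‖z‖ < b} =
      (fun x : ℝ × ℝ => (x.1 : ℂ) * Complex.exp (x.2 * Complex.I)) ''
        ((Ioo a b ∩ Ici 0) ×ˢ univ) := by
    ext z
    constructor
    · rintro ⟨h1, h2⟩
      exact ⟨(‖z‖, z.arg), ⟨⟨⟨h1, h2⟩, norm_nonneg z⟩, mem_univ _⟩, Complex.norm_mul_exp_arg_mul_I z⟩
    · rintro ⟨⟨r, θ⟩, ⟨⟨⟨h1, h2⟩, h3⟩, -⟩, rfl⟩
      have h3 : (0 : ℝ) ≤ r := h3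
      have : ‖(r : ℂ) * Complex.exp (θ * Complex.I)‖ = r := by
        rw [norm_mul, Complex.norm_exp_ofReal_mul_I, Complex.norm_real, Real.norm_of_nonneg h3,
          mul_one]
      simp only [Set.mem_ofPred_eq, this]
      exact ⟨h1, h2⟩
  rw [this]
  refine IsPreconnected.image (IsPreconnected.prod ?_ isPreconnected_univ) _
    (Continuous.continuousOn (by fun_prop))
  exact (ordConnected_Ioo.inter ordConnected_Ici).isPreconnected

lemma floor_add_ceil_even (s : ℝ) (hs : 0 ≤ s) (j : ℕ) : ⌊s⌋₊ + ⌈s⌉₊ = 2 * j ↔ s = j := by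
  constructor
  · intro h
    have h1 := Nat.floor_le hs
    have h2 := Nat.le_ceil s
    have h3 := Nat.ceil_le_floor_add_one s
    have h4 := Nat.floor_le_ceil s
    have h5 : ⌊s⌋₊ = j := by omega
    have h6 : ⌈s⌉₊ = j := by omega
    rw [h5] at h1
    rw [h6] at h2
    exact le_antisymm h2 h1
  · rintro rfl
    simp; ring

lemma floor_add_ceil_gt (s : ℝ) (_hs : 0 ≤ s) (j : ℕ) : 2 * j < ⌊s⌋₊ + ⌈s⌉₊ ↔ j < s := by
  have h3 := Nat.ceil_le_floor_add_one s
  have h4 := Nat.floor_le_ceil s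
  constructor
  · intro h
    exact Nat.lt_ceil.1 (by omega)
  · intro h
    have h1 := Nat.lt_ceil.2 h
    have h2 := Nat.le_floor h.le
    omega

lemma floor_add_ceil_lt (s : ℝ) (hs : 0 ≤ s) (j : ℕ) : ⌊s⌋₊ + ⌈s⌉₊ < 2 * j ↔ s < j := by
  have h1 := floor_add_ceil_even s hs j
  have h2 := floor_add_ceil_gt s hs j
  constructor
  · intro h
    rcases lt_trichotomy s j with h3 | h3 | h3
    · exact h3
    · have := h1.2 h3; omega
    · have := h2.2 h3; omega
  · intro h
    by_contra h3
    rcases (not_lt.1 h3).lt_or_eq with h4 | h4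
    · exact absurd (h2.1 h4) (by linarith)
    · exact h.ne (h1.1 h4.symm)

noncomputable def cls (n : ℕ) (v : ℂ) : ℕ :=
  min n (⌊(((n + 1) / 2 : ℕ) : ℝ) * (1 - ‖v‖)⌋₊ + ⌈(((n + 1) / 2 : ℕ) : ℝ) * (1 - ‖v‖)⌉₊)

lemma cls_fiber (n : ℕ) (hn : 1 ≤ n) (k : ℕ) (hk : k ≤ n) :
    (∃ r : ℝ, 0 ≤ r ∧ r ≤ 1 ∧ ∀ v : ℂ, ‖v‖ ≤ 1 → (cls n v = k ↔ ‖v‖ = r)) ∨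
    (∃ a b : ℝ, a < b ∧ 0 < b ∧ b ≤ 1 ∧ ∀ v : ℂ, ‖v‖ ≤ 1 → (cls n v = k ↔ a < ‖v‖ ∧ ‖v‖ < b)) := by
  set M : ℕ := (n + 1) / 2 with hM
  have hM1 : 1 ≤ M := by omega
  have hMp : (0 : ℝ) < M := by exact_mod_cast hM1
  have hs : ∀ v : ℂ, ‖v‖ ≤ 1 → 0 ≤ (M : ℝ) * (1 - ‖v‖) := fun v hv =>
    mul_nonneg hMp.le (by linarith)
  have hlt : ∀ (v : ℂ) (j : ℝ), j < M * (1 - ‖v‖) ↔ ‖v‖ < 1 - j / M := by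
    intro v j
    rw [lt_sub_comm, div_lt_iff₀ hMp, mul_comm]
  have hgt : ∀ (v : ℂ) (j : ℝ), M * (1 - ‖v‖) < j ↔ 1 - j / M < ‖v‖ := by
    intro v j
    rw [sub_lt_comm, lt_div_iff₀ hMp, mul_comm]
  rcases Nat.even_or_odd' k with ⟨j, rfl | rfl⟩
  · left
    have hjM : (j : ℝ) ≤ M := by exact_mod_cast (by omega : j ≤ M)
    refine ⟨1 - j / M, ?_, ?_, ?_⟩
    · rw [sub_nonneg, div_le_one hMp]; exact hjM
    · have : 0 ≤ (j : ℝ) / M := by positivity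
      linarith
    · intro v hv
      have h1 := floor_add_ceil_even _ (hs v hv) j
      have h2 : (M : ℝ) * (1 - ‖v‖) = j ↔ ‖v‖ = 1 - j / M := by
        rw [eq_sub_iff_add_eq, ← eq_sub_iff_add_eq', div_eq_iff hMp.ne', mul_comm, eq_comm]
      rw [← h2, ← h1, cls, ← hM]
      have h3 : ⌊(M : ℝ) * (1 - ‖v‖)⌋₊ + ⌈(M : ℝ) * (1 - ‖v‖)⌉₊ ≤ 2 * M := by
        have h4 : (M : ℝ) * (1 - ‖v‖) ≤ M := by nlinarith [norm_nonneg v]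
        have h5 : ⌈(M : ℝ) * (1 - ‖v‖)⌉₊ ≤ M := Nat.ceil_le.2 h4
        have := Nat.floor_le_ceil ((M : ℝ) * (1 - ‖v‖))
        omega
      omega
  · right
    have hjM : (j : ℝ) + 1 ≤ M := by exact_mod_cast (by omega : j + 1 ≤ M)
    have hb0 : 0 < 1 - (j : ℝ) / M := by
      rw [sub_pos, div_lt_one hMp]; linarith
    have hb1 : 1 - (j : ℝ) / M ≤ 1 := by
      have : 0 ≤ (j : ℝ) / M := by positivity
      linarith
    by_cases hkn : 2 * j + 1 = n
    · refine ⟨-1, 1 - j / M, by linarith, hb0, hb1, ?_⟩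
      intro v hv
      have h1 := floor_add_ceil_gt _ (hs v hv) j
      rw [← hlt, ← h1, cls, ← hM]
      have : -1 < ‖v‖ := by linarith [norm_nonneg v]
      simp only [this, true_and]
      omega
    · refine ⟨1 - ((j + 1 : ℕ) : ℝ) / M, 1 - j / M, ?_, hb0, hb1, ?_⟩
      · have : (j : ℝ) / M < ((j + 1 : ℕ) : ℝ) / M := by
          gcongr; omega
        linarith
      intro v hv
      have h1 := floor_add_ceil_gt _ (hs v hv) j
      have h2 := floor_add_ceil_lt _ (hs v hv) (j + 1)
      rw [← hlt, ← hgt, ← h1, ← h2, cls, ← hM]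
      omega

lemma exists_square_disc : Nonempty ((𝕀 × 𝕀) ≃ₜ Metric.closedBall (0 : ℂ) 1) := by
  let s : Set ℂ := Complex.equivRealProdCLM.toHomeomorph ⁻¹' (Icc (0 : ℝ) 1 ×ˢ Icc (0 : ℝ) 1)
  have hsc : IsClosed s := (isClosed_Icc.prod isClosed_Icc).preimage
    Complex.equivRealProdCLM.toHomeomorph.continuous
  have hconv : Convex ℝ s :=
    ((convex_Icc (0 : ℝ) 1).prod (convex_Icc (0 : ℝ) 1)).linear_preimage
      Complex.equivRealProdCLM.toLinearEquiv.toLinearMap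
  have hcomp : IsCompact s :=
    (Complex.equivRealProdCLM.toHomeomorph.isCompact_preimage).2
      (isCompact_Icc.prod isCompact_Icc)
  have hint : (interior s).Nonempty := by
    refine ⟨⟨1 / 2, 1 / 2⟩, ?_⟩
    rw [← Homeomorph.preimage_interior, interior_prod_eq, interior_Icc]
    show ((1 / 2 : ℝ), (1 / 2 : ℝ)) ∈ Ioo (0 : ℝ) 1 ×ˢ Ioo (0 : ℝ) 1
    constructor <;> constructor <;> norm_num
  obtain ⟨h, -, hh, -⟩ :=
    exists_homeomorph_image_interior_closure_frontier_eq_unitBall hconv hint hcomp.isBounded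
  rw [hsc.closure_eq] at hh
  let e1 : s ≃ₜ Metric.closedBall (0 : ℂ) 1 := (h.image s).trans (Homeomorph.setCongr hh)
  let e2 : s ≃ₜ (Icc (0 : ℝ) 1 ×ˢ Icc (0 : ℝ) 1 : Set (ℝ × ℝ)) :=
    Complex.equivRealProdCLM.toHomeomorph.subtype (fun x => Iff.rfl)
  let e3 : (Icc (0 : ℝ) 1 ×ˢ Icc (0 : ℝ) 1 : Set (ℝ × ℝ)) ≃ₜ 𝕀 × 𝕀 :=
    Homeomorph.Set.prod _ _
  exact ⟨e3.symm.trans (e2.symm.trans e1)⟩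

/-- Restrict a homeomorphism of the plane fixing everything outside of `U` to the disc. -/
lemma restrict_disc (h : ℂ ≃ₜ ℂ) (hD : ∀ z, ‖z‖ ≤ 1 ↔ ‖h z‖ ≤ 1) :
    ∃ g : Metric.closedBall (0 : ℂ) 1 ≃ₜ Metric.closedBall (0 : ℂ) 1, ∀ z, (g z : ℂ) = h z :=
  ⟨h.subtype (fun z => by simpa using hD z), fun _ => rfl⟩

lemma mem_iff_of_fix (h : ℂ ≃ₜ ℂ) (U : Set ℂ) (hU : ∀ z, z ∉ U → h z = z) (z : ℂ) :
    z ∈ U ↔ h z ∈ U := by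
  constructor
  · intro hz
    by_contra hn
    have h1 := h.injective (hU _ hn)
    rw [h1] at hn
    exact hn hz
  · intro hz
    by_contra hn
    rw [hU z hn] at hz
    exact hn hz

lemma cls_le (n : ℕ) (v : ℂ) : cls n v ≤ n := min_le_left _ _

lemma cls_transitive (n : ℕ) (hn : 1 ≤ n) (v w : Metric.closedBall (0 : ℂ) 1)
    (hvw : cls n v = cls n w) :
    ∃ g : Metric.closedBall (0 : ℂ) 1 ≃ₜ Metric.closedBall (0 : ℂ) 1, g v = w ∧
      ∀ z, cls n (g z) = cls n z := by
  have hv : ‖(v : ℂ)‖ ≤ 1 := mem_closedBall_zero_iff.1 v.2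
  have hw : ‖(w : ℂ)‖ ≤ 1 := mem_closedBall_zero_iff.1 w.2
  rcases cls_fiber n hn (cls n v) (cls_le _ _) with ⟨r, -, -, hr⟩ | ⟨a, b, -, -, hb, hab⟩
  · have h1 : ‖(v : ℂ)‖ = ‖(w : ℂ)‖ := by
      rw [(hr v hv).1 rfl, (hr w hw).1 hvw.symm]
    obtain ⟨u, hu, huv⟩ : ∃ u : ℂ, ‖u‖ = 1 ∧ u * v = w := by
      by_cases h0 : (v : ℂ) = 0
      · refine ⟨1, by simp, ?_⟩
        rw [h0, norm_zero, eq_comm, norm_eq_zero] at h1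
        rw [h0, h1, mul_zero]
      · refine ⟨w / v, ?_, div_mul_cancel₀ _ h0⟩
        rw [norm_div, h1, div_self]
        rw [← h1]
        exact norm_ne_zero_iff.2 h0
    have hu0 : u ≠ 0 := by
      intro h
      simp [h] at hu
    obtain ⟨g, hg⟩ := restrict_disc (Homeomorph.mulLeft₀ u hu0) (fun z => by simp [hu])
    refine ⟨g, Subtype.ext ?_, fun z => ?_⟩
    · rw [hg]; exact huv
    · rw [hg]
      simp [cls, hu]
  · obtain ⟨h, h1, h2⟩ := transitive_open {z : ℂ | a < ‖z‖ ∧ ‖z‖ < b}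
      ((isOpen_lt continuous_const continuous_norm).inter
        (isOpen_lt continuous_norm continuous_const)) (annulus_preconnected a b) v w
      ((hab v hv).1 rfl) ((hab w hw).1 hvw.symm)
    have h3 := mem_iff_of_fix h _ h2
    have hle : ∀ z, z ∈ {z : ℂ | a < ‖z‖ ∧ ‖z‖ < b} → ‖z‖ ≤ 1 := fun z hz => hz.2.le.trans hb
    obtain ⟨g, hg⟩ := restrict_disc h (fun z => by
      by_cases hz : z ∈ {z : ℂ | a < ‖z‖ ∧ ‖z‖ < b}
      · exact iff_of_true (hle _ hz) (hle _ ((h3 z).1 hz))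
      · rw [h2 z hz])
    refine ⟨g, Subtype.ext (by rw [hg, h1]), fun z => ?_⟩
    rw [hg]
    by_cases hz : (z : ℂ) ∈ {z : ℂ | a < ‖z‖ ∧ ‖z‖ < b}
    · rw [(hab _ (hle _ hz)).2 hz, (hab _ (hle _ ((h3 z).1 hz))).2 ((h3 z).1 hz)]
    · rw [h2 z hz]

lemma cls_surj (n : ℕ) (hn : 1 ≤ n) (k : ℕ) (hk : k ≤ n) :
    ∃ v : Metric.closedBall (0 : ℂ) 1, cls n v = k := by
  have key : ∀ r : ℝ, 0 ≤ r → r ≤ 1 → ∃ v : Metric.closedBall (0 : ℂ) 1, ‖(v : ℂ)‖ = r := by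
    intro r h0 h1
    have : ‖(r : ℂ)‖ = r := by rw [Complex.norm_real, Real.norm_of_nonneg h0]
    exact ⟨⟨r, by rw [mem_closedBall_zero_iff, this]; exact h1⟩, this⟩
  rcases cls_fiber n hn k hk with ⟨r, h0, h1, hr⟩ | ⟨a, b, hlt, hb0, hb, hab⟩
  · obtain ⟨v, hv⟩ := key r h0 h1
    exact ⟨v, (hr v (by linarith)).2 hv⟩
  · have h2 : max a 0 < b := max_lt hlt hb0
    have h3 := le_max_left a 0
    have h4 := le_max_right a 0
    obtain ⟨v, hv⟩ := key ((max a 0 + b) / 2) (by linarith) (by linarith)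
    exact ⟨v, (hab v (by linarith)).2 (by rw [hv]; constructor <;> linarith)⟩

lemma cls_loc (n : ℕ) (hn : 1 ≤ n) (k : ℕ) (hk : k ≤ n) :
    IsClosed {v : Metric.closedBall (0 : ℂ) 1 | cls n v = k} ∨
    IsOpen {v : Metric.closedBall (0 : ℂ) 1 | cls n v = k} := by
  have hc : Continuous fun v : Metric.closedBall (0 : ℂ) 1 => ‖(v : ℂ)‖ := by fun_prop
  rcases cls_fiber n hn k hk with ⟨r, h0, h1, hr⟩ | ⟨a, b, hlt, hb0, hb, hab⟩
  · left
    have : {v : Metric.closedBall (0 : ℂ) 1 | cls n v = k} =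
        {v : Metric.closedBall (0 : ℂ) 1 | ‖(v : ℂ)‖ = r} := by
      ext v
      exact hr v (mem_closedBall_zero_iff.1 v.2)
    rw [this]
    exact isClosed_eq hc continuous_const
  · right
    have : {v : Metric.closedBall (0 : ℂ) 1 | cls n v = k} =
        {v : Metric.closedBall (0 : ℂ) 1 | a < ‖(v : ℂ)‖} ∩
        {v : Metric.closedBall (0 : ℂ) 1 | ‖(v : ℂ)‖ < b} := by
      ext v
      exact hab v (mem_closedBall_zero_iff.1 v.2)
    rw [this]
    exact (isOpen_lt continuous_const hc).inter (isOpen_lt hc continuous_const)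

/-- Counting lemma: if the orbits are the fibers of a class function with `n + 1` values,
each fiber being closed or open, there are `n + 1` closures of orbits. -/
lemma count (G : Subgroup ((𝕀 × 𝕀) ≃ₜ (𝕀 × 𝕀))) (n : ℕ) (c : 𝕀 × 𝕀 → ℕ)
    (hle : ∀ x, c x ≤ n) (hsurj : ∀ k ≤ n, ∃ x, c x = k)
    (hloc : ∀ k ≤ n, IsClosed {x | c x = k} ∨ IsOpen {x | c x = k})
    (hinv : ∀ g ∈ G, ∀ x, c (g x) = c x)
    (htr : ∀ x y, c x = c y → ∃ g ∈ G, g x = y) :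
    (orbitClosures G).Finite ∧ (orbitClosures G).ncard = n + 1 := by
  have horb : ∀ x, {y | ∃ g ∈ G, g x = y} = {y | c y = c x} := by
    intro x
    ext y
    constructor
    · rintro ⟨g, hg, rfl⟩
      exact hinv g hg x
    · intro hy
      exact htr x y (Eq.symm hy)
  have heq : orbitClosures G = (fun k => closure {x | c x = k}) '' (Finset.range (n + 1)) := by
    ext S
    constructor
    · rintro ⟨x, rfl⟩
      exact ⟨c x, by simpa using Nat.lt_succ_of_le (hle x), by simp only [horb]⟩
    · rintro ⟨k, hk, rfl⟩
      obtain ⟨x, rfl⟩ := hsurj k (by simpa [Nat.lt_succ_iff] using hk)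
      exact ⟨x, by simp only [horb]⟩
  have hinj : InjOn (fun k => closure {x | c x = k}) (Finset.range (n + 1) : Set ℕ) := by
    intro i hi j hj hij
    have hi : i ≤ n := by simpa [Nat.lt_succ_iff] using hi
    have hj : j ≤ n := by simpa [Nat.lt_succ_iff] using hj
    simp only at hij
    obtain ⟨x, hx⟩ := hsurj i hi
    obtain ⟨y, hy⟩ := hsurj j hj
    have hxc : x ∈ closure {x | c x = j} := hij ▸ subset_closure hx
    have hyc : y ∈ closure {x | c x = i} := hij ▸ subset_closure hy
    rcases hloc i hi with h | h
    · rw [h.closure_eq] at hyc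
      exact (Eq.symm hyc).trans hy
    · obtain ⟨z, hz1, hz2⟩ := mem_closure_iff.1 hxc _ h hx
      exact (Eq.symm hz1).trans hz2
  rw [heq]
  exact ⟨(Finset.finite_toSet _).image _, by
    rw [hinj.ncard_image, ncard_coe_finset, Finset.card_range]⟩

/-- The group of all homeomorphisms preserving a class function. -/
def classGroup (c : 𝕀 × 𝕀 → ℕ) : Subgroup ((𝕀 × 𝕀) ≃ₜ (𝕀 × 𝕀)) where
  carrier := {g | ∀ x, c (g x) = c x}
  mul_mem' := by
    intro f g hf hg x
    exact (hf (g x)).trans (hg x)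
  one_mem' := fun x => rfl
  inv_mem' := by
    intro f hf x
    have h := hf (f.symm x)
    rw [f.apply_symm_apply] at h
    exact h.symm

lemma height_eq (e : (𝕀 × 𝕀) ≃ₜ Metric.closedBall (0 : ℂ) 1) (n : ℕ) (hn : 1 ≤ n) :
    (orbitClosures (classGroup fun x => cls n (e x))).Finite ∧
    (orbitClosures (classGroup fun x => cls n (e x))).ncard = n + 1 := by
  refine count _ n (fun x => cls n (e x)) (fun x => cls_le _ _) ?_ ?_ (fun g hg => hg) ?_
  · intro k hk
    obtain ⟨v, hv⟩ := cls_surj n hn k hk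
    exact ⟨e.symm v, by simpa using hv⟩
  · intro k hk
    exact (cls_loc n hn k hk).imp (fun h => h.preimage e.continuous)
      (fun h => h.preimage e.continuous)
  · intro x y hxy
    obtain ⟨g, hg1, hg2⟩ := cls_transitive n hn (e x) (e y) hxy
    refine ⟨(e.trans g).trans e.symm, fun z => ?_, ?_⟩
    · simp [hg2]
    · simp [hg1]

lemma square_boundary_inv (e : (𝕀 × 𝕀) ≃ₜ Metric.closedBall (0 : ℂ) 1)
    (h : (𝕀 × 𝕀) ≃ₜ (𝕀 × 𝕀)) (x : 𝕀 × 𝕀) (hx : ‖(e x : ℂ)‖ = 1) : ‖(e (h x) : ℂ)‖ = 1 := by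
  have := boundary_inv ((e.symm.trans h).trans e) (e x) hx
  simpa using this

lemma cls_one_eq (v : Metric.closedBall (0 : ℂ) 1) : cls 1 v = if ‖(v : ℂ)‖ = 1 then 0 else 1 := by
  have hv : ‖(v : ℂ)‖ ≤ 1 := mem_closedBall_zero_iff.1 v.2
  have h1 := floor_add_ceil_even (1 - ‖(v : ℂ)‖) (by linarith) 0
  have h2 : cls 1 v = min 1 (⌊1 - ‖(v : ℂ)‖⌋₊ + ⌈1 - ‖(v : ℂ)‖⌉₊) := by simp [cls]
  rw [h2]
  split_ifs with h
  · rw [h1.2 (by rw [h]; simp)]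
    rfl
  · have : ¬ (⌊1 - ‖(v : ℂ)‖⌋₊ + ⌈1 - ‖(v : ℂ)‖⌉₊ = 2 * 0) := by
      rw [h1]
      intro h3
      apply h
      push_cast at h3
      linarith
    omega

lemma classGroup_one (e : (𝕀 × 𝕀) ≃ₜ Metric.closedBall (0 : ℂ) 1) :
    (classGroup fun x => cls 1 (e x)) = ⊤ := by
  refine eq_top_iff.2 fun g _ x => ?_
  simp only [cls_one_eq]
  have : ‖(e (g x) : ℂ)‖ = 1 ↔ ‖(e x : ℂ)‖ = 1 := by
    constructor
    · intro h
      simpa using square_boundary_inv e g.symm (g x) h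
    · exact square_boundary_inv e g x
  simp only [this]

/-- `P_h(𝕌) = {n : n ≥ 1} ∪ {+∞}`: (i) the full homeomorphism group of the Euclidean
unit square has exactly 2 closures of orbits, i.e. height 1; (ii) every subgroup has
infinitely many, or at least 2, closures of orbits; (iii) for every `n ≥ 1` some
subgroup has exactly `n + 1` closures of orbits (height `n`); and (iv) some subgroup
has infinitely many closures of orbits (height `+∞`). -/
theorem unit_square_heights :
    ((orbitClosures ⊤).Finite ∧ (orbitClosures ⊤).ncard = 2) ∧
    (∀ G, (orbitClosures G).Finite → 2 ≤ (orbitClosures G).ncard) ∧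
    (∀ n : ℕ, 1 ≤ n → ∃ G, (orbitClosures G).Finite ∧ (orbitClosures G).ncard = n + 1) ∧
    (∃ G, (orbitClosures G).Infinite) := by
  obtain ⟨e⟩ := exists_square_disc
  refine ⟨?_, ?_, ?_, ?_⟩
  · have := height_eq e 1 le_rfl
    rwa [classGroup_one e] at this
  · intro G hfin
    refine (one_lt_ncard hfin).2 ?_
    let p := e.symm ⟨1, by simp⟩
    let q := e.symm ⟨0, by simp⟩
    have hp : ‖(e p : ℂ)‖ = 1 := by simp [p]
    have hq : ‖(e q : ℂ)‖ = 0 := by simp [q]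
    refine ⟨_, ⟨p, rfl⟩, _, ⟨q, rfl⟩, ?_⟩
    intro heq
    have hcl : IsClosed {x : 𝕀 × 𝕀 | ‖(e x : ℂ)‖ = 1} :=
      isClosed_eq (by fun_prop) continuous_const
    have hsub : closure {y | ∃ g ∈ G, g p = y} ⊆ {x : 𝕀 × 𝕀 | ‖(e x : ℂ)‖ = 1} := by
      refine closure_minimal ?_ hcl
      rintro _ ⟨g, _, rfl⟩
      exact square_boundary_inv e g p hp
    have hqm : q ∈ closure {y | ∃ g ∈ G, g q = y} := subset_closure ⟨1, G.one_mem, rfl⟩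
    rw [← heq] at hqm
    have : ‖(e q : ℂ)‖ = 1 := hsub hqm
    rw [hq] at this
    exact zero_ne_one this
  · intro n hn
    exact ⟨_, height_eq e n hn⟩
  · refine ⟨⊥, ?_⟩
    have : Infinite (𝕀 × 𝕀) := by
      have : Infinite 𝕀 := (Icc_infinite zero_lt_one).to_subtype
      infer_instance
    refine (infinite_range_of_injective (singleton_injective (α := 𝕀 × 𝕀))).mono ?_
    rintro _ ⟨x, rfl⟩
    refine ⟨x, ?_⟩
    have : {y | ∃ g ∈ (⊥ : Subgroup ((𝕀 × 𝕀) ≃ₜ (𝕀 × 𝕀))), g x = y} = {x} := by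
      ext y
      constructor
      · rintro ⟨g, hg, rfl⟩
        rw [Subgroup.mem_bot] at hg
        rw [hg]
        rfl
      · rintro rfl
        exact ⟨1, Subgroup.one_mem _, rfl⟩
    rw [this, closure_singleton]
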